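/- arXiv:1304.7023 — 4 statements merged into one kernel-verified Lean document; each statement's English description precedes it below -/
import Mathlib

section
/- Let $n \ge 1$, let $\rho : \mathbb{R}^n \to \mathbb{R}$ be twice continuously differentiable, and let $E : \mathbb{R}^n \times \mathbb{R}^n \to \mathbb{R}^n$ be continuous with $E(z, cv) = c^2 E(z, v)$ for all $c > 0$. Let $p \in \mathbb{R}^n$ and suppose that for every $v \neq 0$ with $\langle \nabla\rho(p), v \rangle = 0$ one has $D^2\rho(p)(v,v) + \langle E(p, v), \nabla\rho(p) \rangle < 0$. For $\epsilon > 0$ define $\tilde x_\epsilon(z) = -\rho(z) - \epsilon |z - p|^2$. Then there exist $\epsilon_0 > 0$, $C_0 > 0$, and an open neighborhood $U_0$ of $p$ such that for every $\epsilon \in (0, \epsilon_0)$, every $z \in U_0$, and every $v \neq 0$ with $\langle \nabla\tilde x_\epsilon(z), v \rangle = 0$, one has $D^2\tilde x_\epsilon(z)(v,v) + \langle E(z, v), \nabla\tilde x_\epsilon(z) \rangle \ge (C_0/2)\,|v|^2$. -/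
open MeasureTheory Set
open scoped RealInnerProductSpace

open Filter Topology

/-!
Let `F` be the second derivative of `x̃_ε` along the solutions of `γ'' = E(γ, γ')`, as a function
of the starting point `z` and the initial velocity `v`. For `(ε, z) = (0, p)` it is positive at
every unit vector `v` annihilated by `a = dx̃_ε(z)`, so `max F |a v|` is positive on the whole unit
sphere. By compactness of the sphere this maximum stays above a positive constant for `(ε, z)` near
`(0, p)`, and where `a v = 0` the bound is a bound on `F`. Homogeneity of degree two in `v` extends
it from unit vectors to all vectors. The joint `C²` regularity of `(ε, z) ↦ x̃_ε(z)` is what makes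
`F` and `a` continuous in all variables.
-/

section Compactness

variable {X Y : Type*} [TopologicalSpace X] [TopologicalSpace Y] {K : Set Y} {x₀ : X}

theorem exists_pos_eventually_forall_lt_of_isCompact (hK : IsCompact K) {F : X → Y → ℝ}
    (hF : ∀ y ∈ K, ContinuousAt (Function.uncurry F) (x₀, y)) (hpos : ∀ y ∈ K, 0 < F x₀ y) :
    ∃ C > 0, ∀ᶠ x in 𝓝 x₀, ∀ y ∈ K, C < F x y := by
  have hF₀ : ContinuousOn (F x₀) K := fun y hy =>
    ((hF y hy).comp (f := fun y => (x₀, y)) (by fun_prop)).continuousWithinAt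
  obtain ⟨m, hm, hle⟩ := hK.exists_forall_le' hF₀ hpos
  refine ⟨m / 2, half_pos hm, hK.eventually_forall_of_forall_eventually fun y hy => ?_⟩
  exact (hF y hy).eventually_const_lt ((half_lt_self hm).trans_le (hle y hy))

theorem exists_pos_eventually_forall_lt_of_eq_zero {G : Type*} [NormedAddCommGroup G]
    (hK : IsCompact K) {F : X → Y → ℝ} {a : X → Y → G}
    (hF : ∀ y ∈ K, ContinuousAt (Function.uncurry F) (x₀, y))
    (ha : ∀ y ∈ K, ContinuousAt (Function.uncurry a) (x₀, y))
    (hpos : ∀ y ∈ K, a x₀ y = 0 → 0 < F x₀ y) :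
    ∃ C > 0, ∀ᶠ x in 𝓝 x₀, ∀ y ∈ K, a x y = 0 → C < F x y := by
  have hmax : ∀ y ∈ K, 0 < max (F x₀ y) ‖a x₀ y‖ := fun y hy =>
    lt_max_iff.2 <| (eq_or_ne (a x₀ y) 0).imp (hpos y hy) norm_pos_iff.2
  obtain ⟨C, hC, hlt⟩ := exists_pos_eventually_forall_lt_of_isCompact hK
    (F := fun x y => max (F x y) ‖a x y‖) (fun y hy => (hF y hy).max (ha y hy).norm) hmax
  refine ⟨C, hC, hlt.mono fun x hx y hy hay => (lt_max_iff.1 (hx y hy)).resolve_right ?_⟩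
  simpa only [hay, norm_zero, not_lt] using hC.le

end Compactness

section Line

variable {V W : Type*} [NormedAddCommGroup V] [NormedSpace ℝ V] [NormedAddCommGroup W]
  [NormedSpace ℝ W] {f : V → W} {z : V}

theorem hasDerivAt_comp_add_smul {f' : V →L[ℝ] W} {v : V} {t : ℝ}
    (hf : HasFDerivAt f f' (z + t • v)) : HasDerivAt (fun s : ℝ => f (z + s • v)) (f' v) t := by
  have hline : HasDerivAt (fun s : ℝ => z + s • v) v t := by
    simpa only [one_smul] using ((hasDerivAt_id' t).smul_const v).const_add z
  exact hf.comp_hasDerivAt t hline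

theorem iteratedDeriv_two_comp_add_smul (hf : ContDiffAt ℝ 2 f z) (v : V) :
    iteratedDeriv 2 (fun t : ℝ => f (z + t • v)) 0 = fderiv ℝ (fderiv ℝ f) z v v := by
  have hline : Tendsto (fun t : ℝ => z + t • v) (𝓝 0) (𝓝 z) :=
    Continuous.tendsto' (by fun_prop) 0 z (by simp)
  have hderiv : deriv (fun t : ℝ => f (z + t • v)) =ᶠ[𝓝 0] fun t => fderiv ℝ f (z + t • v) v := by
    filter_upwards [hline.eventually (hf.eventually (by simp))] with t ht
    exact (hasDerivAt_comp_add_smul (ht.differentiableAt two_ne_zero).hasFDerivAt).deriv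
  have hfderiv : HasFDerivAt (fderiv ℝ f) (fderiv ℝ (fderiv ℝ f) z) (z + (0 : ℝ) • v) := by
    rw [zero_smul, add_zero]
    exact (hf.fderiv_right (m := 1) one_add_one_eq_two.le).differentiableAt one_ne_zero
      |>.hasFDerivAt
  have hsecond := (ContinuousLinearMap.apply ℝ W v).hasFDerivAt.comp_hasDerivAt (0 : ℝ)
    (hasDerivAt_comp_add_smul hfderiv)
  rw [iteratedDeriv_succ, iteratedDeriv_one, hderiv.deriv_eq]
  exact hsecond.deriv

end Line

theorem contDiffAt_uncurry_fderiv {𝕜 Q V W : Type*} [NontriviallyNormedField 𝕜]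
    [NormedAddCommGroup Q] [NormedSpace 𝕜 Q] [NormedAddCommGroup V] [NormedSpace 𝕜 V]
    [NormedAddCommGroup W] [NormedSpace 𝕜 W]
    {f : Q → V → W} {q₀ : Q} {p : V} {m n : WithTop ℕ∞}
    (hf : ContDiffAt 𝕜 n (Function.uncurry f) (q₀, p)) (hmn : m + 1 ≤ n) :
    ContDiffAt 𝕜 m (Function.uncurry fun q => fderiv 𝕜 (f q)) (q₀, p) :=
  ContDiffAt.fderiv (f := fun x : Q × V => f x.1) (g := Prod.snd) (x₀ := (q₀, p))
    (hf.comp (f := fun y : (Q × V) × V => (y.1.1, y.2)) ((q₀, p), p) (by fun_prop))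
    contDiffAt_snd hmn

section FlowHessian

variable {V : Type*} [NormedAddCommGroup V] [NormedSpace ℝ V]

/-- The second derivative at time `0` of `f ∘ γ`, where `γ` solves `γ'' = E(γ, γ')` with
`γ(0) = z` and `γ'(0) = v`. Its sign on the vectors tangent to a level set of `f` is what convexity
or concavity of the level set with respect to the flow of `E` refers to. It is expressed through the
derivatives of `f` at `z`, so that no solution `γ` has to exist. -/
noncomputable def flowHessian (E : V → V → V) (f : V → ℝ) (z v : V) : ℝ :=
  fderiv ℝ (fderiv ℝ f) z v v + fderiv ℝ f z (E z v)

variable {E : V → V → V}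

theorem flowHessian_neg (f : V → ℝ) (z v : V) :
    flowHessian E (fun w => -f w) z v = -flowHessian E f z v := by
  have hfderiv : fderiv ℝ (fun w => -f w) = fun w => -fderiv ℝ f w := funext fun w => fderiv_fun_neg
  simp only [flowHessian, hfderiv, fderiv_fun_neg, neg_apply, neg_add]

theorem flowHessian_smul {f : V → ℝ} {z v : V} {c : ℝ} (hE : E z (c • v) = c ^ 2 • E z v) :
    flowHessian E f z (c • v) = c ^ 2 * flowHessian E f z v := by
  simp only [flowHessian, hE, map_smul, smul_apply, smul_eq_mul]
  ring

theorem mul_sq_norm_le_flowHessian_of_norm_eq_one {f : V → ℝ} {z : V} {C : ℝ}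
    (hE : ∀ (v : V) (c : ℝ), 0 < c → E z (c • v) = c ^ 2 • E z v)
    (hC : ∀ u : V, ‖u‖ = 1 → fderiv ℝ f z u = 0 → C ≤ flowHessian E f z u)
    {v : V} (hv : v ≠ 0) (hfv : fderiv ℝ f z v = 0) :
    C * ‖v‖ ^ 2 ≤ flowHessian E f z v := by
  have hpos : 0 < ‖v‖ := norm_pos_iff.2 hv
  have hle : C ≤ flowHessian E f z (‖v‖⁻¹ • v) :=
    hC _ (norm_smul_inv_norm hv) (by rw [map_smul, hfv, smul_zero])
  rwa [flowHessian_smul (hE v _ (inv_pos.2 hpos)), inv_pow, inv_mul_eq_div,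
    le_div_iff₀ (pow_pos hpos 2)] at hle

variable {Q : Type*} [NormedAddCommGroup Q] [NormedSpace ℝ Q] {f : Q → V → ℝ} {q₀ : Q} {p : V}

theorem continuousAt_flowHessian (hf : ContDiffAt ℝ 2 (Function.uncurry f) (q₀, p)) {v : V}
    (hE : ContinuousAt (Function.uncurry E) (p, v)) :
    ContinuousAt (fun x : (Q × V) × V => flowHessian E (f x.1.1) x.1.2 x.2) ((q₀, p), v) := by
  have hf' := contDiffAt_uncurry_fderiv (m := 1) hf one_add_one_eq_two.le
  have hf'' := contDiffAt_uncurry_fderiv (m := 0) hf' (zero_add 1).le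
  have hvel : ContinuousAt (fun x : (Q × V) × V => E x.1.2 x.2) ((q₀, p), v) :=
    hE.comp (f := fun x : (Q × V) × V => (x.1.2, x.2)) (x := ((q₀, p), v)) (by fun_prop)
  exact ((hf''.continuousAt.fst'.clm_apply continuousAt_snd).clm_apply continuousAt_snd).add
    (hf'.continuousAt.fst'.clm_apply hvel)

theorem exists_pos_eventually_mul_sq_norm_le_flowHessian [ProperSpace V]
    (hf : ContDiffAt ℝ 2 (Function.uncurry f) (q₀, p))
    (hEcont : ∀ v ≠ 0, ContinuousAt (Function.uncurry E) (p, v))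
    (hEhom : ∀ᶠ z in 𝓝 p, ∀ (v : V) (c : ℝ), 0 < c → E z (c • v) = c ^ 2 • E z v)
    (hp : ∀ v ≠ 0, fderiv ℝ (f q₀) p v = 0 → 0 < flowHessian E (f q₀) p v) :
    ∃ C > 0, ∀ᶠ x in 𝓝 (q₀, p), ∀ v ≠ 0, fderiv ℝ (f x.1) x.2 v = 0 →
      C * ‖v‖ ^ 2 ≤ flowHessian E (f x.1) x.2 v := by
  have hsphere {u : V} (hu : u ∈ Metric.sphere (0 : V) 1) : u ≠ 0 :=
    ne_zero_of_mem_unit_sphere ⟨u, hu⟩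
  have hf' := (contDiffAt_uncurry_fderiv (m := 1) hf one_add_one_eq_two.le).continuousAt
  obtain ⟨C, hC, hlt⟩ := exists_pos_eventually_forall_lt_of_eq_zero
    (isCompact_sphere (0 : V) 1)
    (F := fun x : Q × V => flowHessian E (f x.1) x.2) (a := fun x u => fderiv ℝ (f x.1) x.2 u)
    (fun u hu => continuousAt_flowHessian hf (hEcont u (hsphere hu)))
    (fun u _ => hf'.fst'.clm_apply continuousAt_snd)
    (fun u hu => hp u (hsphere hu))
  refine ⟨C, hC, ?_⟩
  filter_upwards [hlt, continuousAt_snd.eventually hEhom] with x hx hEx v hv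
  exact mul_sq_norm_le_flowHessian_of_norm_eq_one hEx
    (fun u hu hfu => (hx u (mem_sphere_zero_iff_norm.2 hu) hfu).le) hv

end FlowHessian

theorem iteratedDeriv_two_add_inner_gradient {V : Type*} [NormedAddCommGroup V]
    [InnerProductSpace ℝ V] [CompleteSpace V] {E : V → V → V} {f : V → ℝ} {z : V}
    (hf : ContDiffAt ℝ 2 f z) (v : V) :
    iteratedDeriv 2 (fun t : ℝ => f (z + t • v)) 0 + ⟪E z v, gradient f z⟫ =
      flowHessian E f z v := by
  rw [iteratedDeriv_two_comp_add_smul hf, inner_gradient_right, conj_trivial, flowHessian]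

theorem stmt1_general {V : Type*} [NormedAddCommGroup V] [InnerProductSpace ℝ V] [ProperSpace V]
    {x : ℝ → V → ℝ} {ρ : V → ℝ} {E : V → V → V} {p : V}
    (hx : ContDiffAt ℝ 2 (Function.uncurry x) (0, p)) (hx₀ : ∀ w, x 0 w = -ρ w)
    (hEcont : ∀ v ≠ 0, ContinuousAt (Function.uncurry E) (p, v))
    (hEhom : ∀ᶠ z in 𝓝 p, ∀ (v : V) (c : ℝ), 0 < c → E z (c • v) = c ^ 2 • E z v)
    (hp : ∀ v ≠ 0, ⟪gradient ρ p, v⟫ = 0 →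
      iteratedDeriv 2 (fun t : ℝ => ρ (p + t • v)) 0 + ⟪E p v, gradient ρ p⟫ < 0) :
    ∃ (ε₀ C₀ : ℝ) (U₀ : Set V), 0 < ε₀ ∧ 0 < C₀ ∧ IsOpen U₀ ∧ p ∈ U₀ ∧
      ∀ ε ∈ Ioo 0 ε₀, ∀ z ∈ U₀, ∀ v ≠ 0, ⟪gradient (x ε) z, v⟫ = 0 →
        C₀ / 2 * ‖v‖ ^ 2 ≤
          iteratedDeriv 2 (fun t : ℝ => x ε (z + t • v)) 0 + ⟪E z v, gradient (x ε) z⟫ := by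
  obtain rfl : ρ = fun w => -x 0 w := funext fun w => by rw [hx₀, neg_neg]
  have hxp : ∀ᶠ y in 𝓝 ((0 : ℝ), p), ContDiffAt ℝ 2 (x y.1) y.2 :=
    (hx.eventually (by simp)).mono fun y hy =>
      ContDiffAt.comp (f := fun w => (y.1, w)) y.2 hy (contDiff_prodMk_right y.1).contDiffAt
  have hpos : ∀ v ≠ 0, fderiv ℝ (x 0) p v = 0 → 0 < flowHessian E (x 0) p v := fun v hv hxv => by
    have hneg := hp v hv (by rw [inner_gradient_left, fderiv_fun_neg, neg_apply, hxv, neg_zero])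
    rwa [iteratedDeriv_two_add_inner_gradient hxp.self_of_nhds.neg, flowHessian_neg,
      neg_lt_zero] at hneg
  obtain ⟨C, hC, hle⟩ := exists_pos_eventually_mul_sq_norm_le_flowHessian hx hEcont hEhom hpos
  obtain ⟨⟨ε₀, U₀⟩, ⟨hε₀, hpU₀, hU₀⟩, hnear⟩ :=
    ((nhds_basis_zero_abs_lt ℝ).prod_nhds (nhds_basis_opens p)).eventually_iff.1 (hle.and hxp)
  refine ⟨ε₀, C, U₀, hε₀, hC, hU₀, hpU₀, fun ε hε z hz v hv hxv => ?_⟩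
  obtain ⟨hbound, hsmooth⟩ := hnear (x := (ε, z)) ⟨by simpa [abs_of_pos hε.1] using hε.2, hz⟩
  rw [inner_gradient_left] at hxv
  rw [iteratedDeriv_two_add_inner_gradient hsmooth]
  exact (mul_le_mul_of_nonneg_right (half_le_self hC.le) (sq_nonneg _)).trans (hbound v hv hxv)

/-- Construction of the function `x̃_ε(z) = -ρ(z) - ε|z-p|²` whose level sets
are uniformly strictly concave (from the side of the super-level sets) with respect to the
flow defined by `E`, near a point `p` of strict `E`-convexity of `{ρ = 0}`. -/
theorem stmt1 (n : ℕ) (hn : 1 ≤ n)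
    (ρ : EuclideanSpace ℝ (Fin n) → ℝ) (hρ : ContDiff ℝ 2 ρ)
    (E : EuclideanSpace ℝ (Fin n) → EuclideanSpace ℝ (Fin n) → EuclideanSpace ℝ (Fin n))
    (hEcont : Continuous fun p : EuclideanSpace ℝ (Fin n) × EuclideanSpace ℝ (Fin n) => E p.1 p.2)
    (hEhom : ∀ (z v : EuclideanSpace ℝ (Fin n)) (c : ℝ), 0 < c → E z (c • v) = c ^ 2 • E z v)
    (p : EuclideanSpace ℝ (Fin n))
    (hp : ∀ v : EuclideanSpace ℝ (Fin n), v ≠ 0 → ⟪gradient ρ p, v⟫ = 0 →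
      iteratedDeriv 2 (fun t : ℝ => ρ (p + t • v)) 0 + ⟪E p v, gradient ρ p⟫ < 0) :
    ∃ (ε₀ C₀ : ℝ) (U₀ : Set (EuclideanSpace ℝ (Fin n))),
      0 < ε₀ ∧ 0 < C₀ ∧ IsOpen U₀ ∧ p ∈ U₀ ∧
      ∀ ε ∈ Set.Ioo (0 : ℝ) ε₀, ∀ z ∈ U₀, ∀ v : EuclideanSpace ℝ (Fin n), v ≠ 0 →
        ⟪gradient (fun w => -ρ w - ε * ‖w - p‖ ^ 2) z, v⟫ = 0 →
        (C₀ / 2) * ‖v‖ ^ 2 ≤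
          iteratedDeriv 2 (fun t : ℝ => -ρ (z + t • v) - ε * ‖z + t • v - p‖ ^ 2) 0
            + ⟪E z v, gradient (fun w => -ρ w - ε * ‖w - p‖ ^ 2) z⟫ := by
  have hx : ContDiff ℝ 2 fun y : ℝ × EuclideanSpace ℝ (Fin n) => -ρ y.2 - y.1 * ‖y.2 - p‖ ^ 2 :=
    (hρ.comp contDiff_snd).neg.sub (contDiff_fst.mul ((contDiff_snd.sub contDiff_const).norm_sq ℝ))
  exact stmt1_general (x := fun ε w => -ρ w - ε * ‖w - p‖ ^ 2) hx.contDiffAt (by simp)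
    (fun _ _ => hEcont.continuousAt) (.of_forall hEhom) hp
end

section
/- Let $C > 0$, $x_0 > 0$, $\delta_0 > 0$, and let $u : (-\delta_0, \delta_0) \to \mathbb{R}$ be twice continuously differentiable with $u''(t) \ge C$ for all $t \in (-\delta_0, \delta_0)$. Suppose $u(0) = x \ge 0$ and $u'(0) = \lambda$ with $\lambda^2 \le 2Cx$. Then for every $t \in (-\delta_0, \delta_0)$ with $|t| \ge \frac{|\lambda|}{C} + \sqrt{\frac{2 x_0}{C}}$, one has $u(t) \ge x_0$. -/
open Set

/-!
The bound `u'' ≥ C` makes `u` strongly convex, so with `r = |t|` and `μ = |u' 0|` the graph of `u`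
lies above the parabola `u 0 - μ r + C r² / 2 = u 0 - μ² / (2 C) + C / 2 * (r - μ / C)²`.
The assumption on the initial slope says exactly that `u 0 - μ² / (2 C) ≥ 0`, and the remaining
square reaches the height `x₀` as soon as `r - μ / C ≥ √(2 x₀ / C)`.
-/

theorem strongConvexOn_of_hasDerivWithinAt2_ge {s : Set ℝ} (hs : Convex ℝ s) {m : ℝ}
    {f f' f'' : ℝ → ℝ} (hf : ContinuousOn f s)
    (hf' : ∀ x ∈ interior s, HasDerivWithinAt f (f' x) (interior s) x)
    (hf'' : ∀ x ∈ interior s, HasDerivWithinAt f' (f'' x) (interior s) x)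
    (hm : ∀ x ∈ interior s, m ≤ f'' x) : StrongConvexOn s m f := by
  simp only [strongConvexOn_iff_convex, Real.norm_eq_abs, sq_abs]
  refine convexOn_of_hasDerivWithinAt2_nonneg (f' := fun x ↦ f' x - m * x)
    (f'' := fun x ↦ f'' x - m) hs (by fun_prop) (fun x hx ↦ ?_) (fun x hx ↦ ?_)
    fun x hx ↦ sub_nonneg.2 (hm x hx)
  · refine ((hf' x hx).sub ((hasDerivWithinAt_id x _).pow 2 |>.const_mul (m / 2))).congr_deriv ?_
    simp only [id, Nat.cast_ofNat]
    ring
  · exact ((hf'' x hx).sub ((hasDerivWithinAt_id x _).const_mul m)).congr_deriv (by rw [mul_one])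

theorem strongConvexOn_of_hasDerivAt2_ge {s : Set ℝ} (hs : Convex ℝ s) {m : ℝ}
    {f f' f'' : ℝ → ℝ} (hf' : ∀ x ∈ s, HasDerivAt f (f' x) x)
    (hf'' : ∀ x ∈ interior s, HasDerivAt f' (f'' x) x) (hm : ∀ x ∈ interior s, m ≤ f'' x) :
    StrongConvexOn s m f :=
  strongConvexOn_of_hasDerivWithinAt2_ge hs (HasDerivAt.continuousOn hf')
    (fun x hx ↦ (hf' x (interior_subset hx)).hasDerivWithinAt)
    (fun x hx ↦ (hf'' x hx).hasDerivWithinAt) hm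

section NormedSpace

variable {E : Type*} [NormedAddCommGroup E] [NormedSpace ℝ E] {s : Set E} {f : E → ℝ} {x y : E}

theorem add_lineDeriv_add_le_of_uniformConvexOn {φ : ℝ → ℝ} {f' : ℝ} (hf : UniformConvexOn s φ f)
    (hx : x ∈ s) (hy : y ∈ s) (hf' : HasLineDerivWithinAt ℝ f f' s x (y - x)) :
    f x + f' + φ ‖y - x‖ ≤ f y := by
  -- On the segment, `f` lies below a parabola through `f x`, so their difference is minimal at `0`.
  let gap : ℝ → ℝ := fun θ ↦
    (1 - θ) * f x + θ * f y - (1 - θ) * θ * φ ‖y - x‖ - f (x + θ • (y - x))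
  have gap_min : IsMinOn gap (Icc 0 1) 0 := fun θ hθ ↦ by
    have segment_eq : (1 - θ) • x + θ • y = x + θ • (y - x) := by module
    have := hf.2 hx hy (sub_nonneg.2 hθ.2) hθ.1 (sub_add_cancel 1 θ)
    simp only [segment_eq, smul_eq_mul, norm_sub_rev x y] at this
    simpa [gap] using this
  have gap_deriv : HasDerivWithinAt gap (f y - f x - φ ‖y - x‖ - f') (Icc 0 1) 0 := by
    have hid := hasDerivWithinAt_id (0 : ℝ) (Icc 0 1)
    have hsegment : Icc (0 : ℝ) 1 ⊆ (fun θ ↦ x + θ • (y - x)) ⁻¹' s :=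
      fun _ hθ ↦ hf.1.add_smul_sub_mem hx hy hθ
    refine (((hid.const_sub 1).mul_const (f x)).add (hid.mul_const (f y)) |>.sub
      (((hid.const_sub 1).mul hid).mul_const (φ ‖y - x‖)) |>.sub
      (HasDerivWithinAt.mono hf' hsegment)).congr_deriv ?_
    simp only [id]
    ring
  have gap_deriv_nonneg : 0 ≤ f y - f x - φ ‖y - x‖ - f' := by
    simpa using gap_min.localize.hasFDerivWithinAt_nonneg gap_deriv.hasFDerivWithinAt
      (y := (1 : ℝ)) (mem_posTangentConeAt_of_segment_subset (by simp [segment_eq_Icc]))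
  linarith

theorem sub_sq_norm_div_add_le_of_strongConvexOn {m : ℝ} (hm : m ≠ 0) {f' : E →L[ℝ] ℝ}
    (hf : StrongConvexOn s m f) (hx : x ∈ s) (hy : y ∈ s) (hf' : HasFDerivWithinAt f f' s x) :
    f x - ‖f'‖ ^ 2 / (2 * m) + m / 2 * (‖y - x‖ - ‖f'‖ / m) ^ 2 ≤ f y :=
  calc
    f x - ‖f'‖ ^ 2 / (2 * m) + m / 2 * (‖y - x‖ - ‖f'‖ / m) ^ 2
      = f x - ‖f'‖ * ‖y - x‖ + m / 2 * ‖y - x‖ ^ 2 := by field_simp; ring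
    _ ≤ f x + f' (y - x) + m / 2 * ‖y - x‖ ^ 2 := by
      have := neg_le_of_abs_le (f'.le_opNorm (y - x))
      linarith
    _ ≤ f y := add_lineDeriv_add_le_of_uniformConvexOn hf hx hy (hf'.hasLineDerivWithinAt _)

theorem stmt6_general {C x₀ : ℝ} (hC : 0 < C) {f' : E →L[ℝ] ℝ} (hf : StrongConvexOn s C f)
    (hx : x ∈ s) (hf' : HasFDerivWithinAt f f' s x) (hslope : ‖f'‖ ^ 2 ≤ 2 * C * f x)
    (hy : y ∈ s) (hfar : ‖f'‖ / C + √(2 * x₀ / C) ≤ ‖y - x‖) : x₀ ≤ f y := by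
  have hvertex : 0 ≤ f x - ‖f'‖ ^ 2 / (2 * C) :=
    sub_nonneg.2 ((div_le_iff₀' (by positivity)).2 hslope)
  have hsquare : 2 * x₀ / C ≤ (‖y - x‖ - ‖f'‖ / C) ^ 2 :=
    (Real.sqrt_le_iff.1 (le_sub_iff_add_le'.2 hfar)).2
  calc
    x₀ = C / 2 * (2 * x₀ / C) := by field_simp
    _ ≤ C / 2 * (‖y - x‖ - ‖f'‖ / C) ^ 2 := by gcongr
    _ ≤ f x - ‖f'‖ ^ 2 / (2 * C) + C / 2 * (‖y - x‖ - ‖f'‖ / C) ^ 2 :=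
      le_add_of_nonneg_left hvertex
    _ ≤ f y := sub_sq_norm_div_add_le_of_strongConvexOn hC.ne' hf hx hy hf'

end NormedSpace

/-- Escape estimate: if `u'' ≥ C > 0` on `(-δ₀, δ₀)`, `u(0) = x ≥ 0` and
`u'(0)² ≤ 2Cx`, then `u(t) ≥ x₀` as soon as `|t| ≥ |u'(0)|/C + √(2x₀/C)`. -/
theorem stmt6 (C x₀ δ₀ : ℝ) (hC : 0 < C) (hx₀ : 0 < x₀) (hδ₀ : 0 < δ₀)
    (u u' u'' : ℝ → ℝ)
    (hu : ∀ t ∈ Set.Ioo (-δ₀) δ₀, HasDerivAt u (u' t) t)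
    (hu' : ∀ t ∈ Set.Ioo (-δ₀) δ₀, HasDerivAt u' (u'' t) t)
    (hu''cont : ContinuousOn u'' (Set.Ioo (-δ₀) δ₀))
    (hbound : ∀ t ∈ Set.Ioo (-δ₀) δ₀, C ≤ u'' t)
    (hx : 0 ≤ u 0) (hlam : (u' 0) ^ 2 ≤ 2 * C * u 0) :
    ∀ t ∈ Set.Ioo (-δ₀) δ₀, |u' 0| / C + Real.sqrt (2 * x₀ / C) ≤ |t| → x₀ ≤ u t := by
  intro t ht hfar
  have h0 : (0 : ℝ) ∈ Ioo (-δ₀) δ₀ := ⟨neg_lt_zero.2 hδ₀, hδ₀⟩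
  have hconvex : StrongConvexOn (Ioo (-δ₀) δ₀) C u :=
    strongConvexOn_of_hasDerivAt2_ge (convex_Ioo _ _) hu (fun s hs ↦ hu' s (interior_subset hs))
      fun s hs ↦ hbound s (interior_subset hs)
  exact stmt6_general hC hconvex h0 (hu 0 h0).hasFDerivAt.hasFDerivWithinAt (by simpa using hlam)
    ht (by simpa using hfar)
end

section
/- Let $n \ge 3$, let $\sigma$ denote the surface measure on the unit sphere $\mathbb{S}^{n-2} \subset \mathbb{R}^{n-1}$, normalized so that $\int_{\mathbb{R}^{n-1}} f(Y)\, dY = \int_0^\infty \int_{\mathbb{S}^{n-2}} f(r\omega)\, r^{n-2}\, d\sigma(\omega)\, dr$, and let $\alpha : \mathbb{S}^{n-2} \to \mathbb{R}$ be continuous with $\alpha(\omega) > 0$ for all $\omega$. Then for every $b > 0$ and $\eta \in \mathbb{R}^{n-1}$, writing $\hat Y = Y/|Y|$, $\int_{\mathbb{R}^{n-1}} e^{-i \eta \cdot Y}\, |Y|^{2-n} \Big( \sqrt{\alpha(\hat Y)}\, e^{-b\,\alpha(\hat Y)\,|Y|^2} + \sqrt{\alpha(-\hat Y)}\, e^{-b\,\alpha(-\hat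 Y)\,|Y|^2} \Big) dY \;=\; \sqrt{\frac{\pi}{b}} \int_{\mathbb{S}^{n-2}} \exp\!\left(-\frac{(\eta\cdot\omega)^2}{4\, b\, \alpha(\omega)}\right) d\sigma(\omega).$ -/
open MeasureTheory Set
open scoped RealInnerProductSpace

/-!
In polar coordinates the weight `|Y|^(2-n)` cancels the Jacobian. Reflecting `Y ↦ -Y` moves the
symmetrization from the kernel to the exponential, so that in each direction `ω` the two half-line
integrals join into the Fourier transform of a one-dimensional Gaussian at frequency `η · ω`. The
factor `√α` makes the radial mass of the kernel independent of the direction, which gives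
integrability without any bound on `α`. Testing the polar formula for `σ` on products of a Gaussian
in the radius with indicators in the direction identifies `σ` with `volume.toSphere`.
-/

section PolarCoordinates

open Metric (sphere)
open Module (finrank)

variable {E F : Type*} [NormedAddCommGroup E] [NormedSpace ℝ E]
  [NormedAddCommGroup F] [NormedSpace ℝ F]

lemma norm_smul_coe_sphere {r : ℝ} (hr : 0 < r) (ω : sphere (0 : E) 1) : ‖r • (ω : E)‖ = r := by
  rw [norm_smul, norm_eq_of_mem_sphere, mul_one, Real.norm_of_nonneg hr.le]

/-- Polar coordinates `Y ↦ (Y / ‖Y‖, ‖Y‖)` on the punctured space, with the radius taken in `ℝ`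
rather than in `Ioi 0` so that iterated integrals are over sets of reals. -/
noncomputable def toPolar (Y : ({0}ᶜ : Set E)) : sphere (0 : E) 1 × ℝ :=
  Prod.map id (↑) (homeomorphUnitSphereProd E Y)

lemma snd_smul_fst_toPolar (Y : ({0}ᶜ : Set E)) :
    (toPolar Y).2 • ((toPolar Y).1 : E) = Y :=
  congrArg Subtype.val ((homeomorphUnitSphereProd E).symm_apply_apply Y)

/-- The function on `E` whose expression in polar coordinates, multiplied by the Jacobian
`r ^ (dim E - 1)`, is `G`. It is used to carry integrands given in polar coordinates over to `E`.
The direction of `Y = 0` is the junk value `0`. -/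
noncomputable def ofPolarDensity (G : E → ℝ → ℝ) (Y : E) : ℝ :=
  (‖Y‖ ^ (finrank ℝ E - 1))⁻¹ * G (‖Y‖⁻¹ • Y) ‖Y‖

lemma pow_mul_ofPolarDensity_smul (G : E → ℝ → ℝ) {r : ℝ} (hr : 0 < r) (ω : sphere (0 : E) 1) :
    r ^ (finrank ℝ E - 1) * ofPolarDensity G (r • (ω : E)) = G ω r := by
  rw [ofPolarDensity, norm_smul_coe_sphere hr, inv_smul_smul₀ hr.ne',
    mul_inv_cancel_left₀ (pow_ne_zero _ hr.ne')]

lemma ae_snd_pos_prod_restrict_Ioi {X : Type*} [MeasurableSpace X] (ν : Measure X) :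
    ∀ᵐ p ∂ν.prod (volume.restrict (Ioi (0 : ℝ))), 0 < p.2 :=
  Measure.quasiMeasurePreserving_snd.ae (ae_restrict_mem measurableSet_Ioi)

lemma toReal_ofReal_snd_pow_smul_ae_eq {X : Type*} [MeasurableSpace X] (ν : Measure X) (m : ℕ)
    (g : X × ℝ → F) :
    (fun p ↦ (ENNReal.ofReal (p.2 ^ m)).toReal • g p)
      =ᵐ[ν.prod (volume.restrict (Ioi (0 : ℝ)))] fun p ↦ p.2 ^ m • g p := by
  filter_upwards [ae_snd_pos_prod_restrict_Ioi ν] with p hp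
  rw [ENNReal.toReal_ofReal (by positivity)]

lemma measurePreserving_coe_volumeIoiPow (m : ℕ) :
    MeasurePreserving (fun r : Ioi (0 : ℝ) ↦ (r : ℝ)) (Measure.volumeIoiPow m)
      ((volume.restrict (Ioi 0)).withDensity fun r ↦ ENNReal.ofReal (r ^ m)) := by
  refine ⟨measurable_subtype_coe, Measure.ext fun s hs ↦ ?_⟩
  rw [Measure.map_apply measurable_subtype_coe hs, Measure.volumeIoiPow,
    withDensity_apply _ (measurable_subtype_coe hs), withDensity_apply _ hs,
    setLIntegral_subtype measurableSet_Ioi _ fun r : ℝ ↦ ENNReal.ofReal (r ^ m),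
    Measure.restrict_restrict hs, Subtype.image_preimage_coe, inter_comm]

variable [MeasurableSpace E]

lemma pow_smul_ofPolarDensity_ae_eq (ν : Measure (sphere (0 : E) 1)) (G : E → ℝ → ℝ) :
    (fun p : sphere (0 : E) 1 × ℝ ↦
        p.2 ^ (finrank ℝ E - 1) • ofPolarDensity G (p.2 • (p.1 : E)))
      =ᵐ[ν.prod (volume.restrict (Ioi 0))] fun p ↦ G p.1 p.2 := by
  filter_upwards [ae_snd_pos_prod_restrict_Ioi ν] with p hp
  exact pow_mul_ofPolarDensity_smul G hp p.1

variable [BorelSpace E]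

lemma measurableEmbedding_toPolar : MeasurableEmbedding (toPolar (E := E)) :=
  (MeasurableEmbedding.id.prodMap (MeasurableEmbedding.subtype_coe measurableSet_Ioi)).comp
    (homeomorphUnitSphereProd E).measurableEmbedding

variable [FiniteDimensional ℝ E] (μ : Measure E) [μ.IsAddHaarMeasure]

lemma measurePreserving_toPolar :
    MeasurePreserving (toPolar (E := E)) (μ.comap (↑))
      ((μ.toSphere.prod (volume.restrict (Ioi 0))).withDensity
        fun p ↦ ENNReal.ofReal (p.2 ^ (finrank ℝ E - 1))) := by
  rw [← prod_withDensity_right (g := fun r : ℝ ↦ ENNReal.ofReal (r ^ (finrank ℝ E - 1)))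
    (by fun_prop)]
  exact ((MeasurePreserving.id _).prod (measurePreserving_coe_volumeIoiPow _)).comp
    μ.measurePreserving_homeomorphUnitSphereProd

variable [Nontrivial E]

lemma integrable_polar_iff {f : E → F} :
    Integrable (fun p : sphere (0 : E) 1 × ℝ ↦ p.2 ^ (finrank ℝ E - 1) • f (p.2 • (p.1 : E)))
      (μ.toSphere.prod (volume.restrict (Ioi 0))) ↔ Integrable f μ := by
  rw [← integrable_congr (toReal_ofReal_snd_pow_smul_ae_eq _ _ _),
    ← integrable_withDensity_iff_integrable_smul' (by fun_prop) (by simp),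
    ← (measurePreserving_toPolar μ).integrable_comp_emb measurableEmbedding_toPolar]
  simp only [Function.comp_def, snd_smul_fst_toPolar]
  conv_rhs => rw [← restrict_compl_singleton (μ := μ) 0]
  exact (integrableOn_iff_comap_subtypeVal (measurableSet_singleton 0).compl).symm

lemma integral_polar (f : E → F) :
    ∫ p : sphere (0 : E) 1 × ℝ, p.2 ^ (finrank ℝ E - 1) • f (p.2 • (p.1 : E))
      ∂μ.toSphere.prod (volume.restrict (Ioi 0)) = ∫ Y, f Y ∂μ := by
  rw [← integral_congr_ae (toReal_ofReal_snd_pow_smul_ae_eq _ _ _),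
    ← integral_withDensity_eq_integral_toReal_smul (by fun_prop) (by simp),
    ← (measurePreserving_toPolar μ).integral_comp measurableEmbedding_toPolar]
  simp only [snd_smul_fst_toPolar]
  rw [integral_subtype_comap (measurableSet_singleton 0).compl f, restrict_compl_singleton]

variable {μ}

lemma integral_eq_integral_sphere_integral_Ioi {f : E → F} (hf : Integrable f μ) :
    ∫ Y, f Y ∂μ = ∫ ω : sphere (0 : E) 1,
      (∫ r in Ioi (0 : ℝ), r ^ (finrank ℝ E - 1) • f (r • (ω : E))) ∂μ.toSphere := by
  rw [← integral_polar, integral_prod _ ((integrable_polar_iff μ).2 hf)]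

lemma integrable_ofPolarDensity_iff {G : E → ℝ → ℝ} :
    Integrable (ofPolarDensity G) μ ↔ Integrable (fun p : sphere (0 : E) 1 × ℝ ↦ G p.1 p.2)
      (μ.toSphere.prod (volume.restrict (Ioi 0))) := by
  rw [← integrable_polar_iff, integrable_congr (pow_smul_ofPolarDensity_ae_eq _ G)]

lemma integral_ofPolarDensity (G : E → ℝ → ℝ) :
    ∫ Y, ofPolarDensity G Y ∂μ = ∫ p : sphere (0 : E) 1 × ℝ, G p.1 p.2
      ∂μ.toSphere.prod (volume.restrict (Ioi 0)) := by
  rw [← integral_polar, integral_congr_ae (pow_smul_ofPolarDensity_ae_eq _ G)]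

variable {σ : Measure (sphere (0 : E) 1)}

lemma integral_sphere_eq_of_integral_polar
    (hσ : ∀ f : E → ℝ, Integrable f μ → ∫ Y, f Y ∂μ =
      ∫ r in Ioi (0 : ℝ), (∫ ω : sphere (0 : E) 1, f (r • (ω : E)) ∂σ) * r ^ (finrank ℝ E - 1))
    {ψ : E → ℝ} (hψ : Integrable (fun ω : sphere (0 : E) 1 ↦ ψ ω) μ.toSphere) :
    ∫ ω : sphere (0 : E) 1, ψ ω ∂σ = ∫ ω : sphere (0 : E) 1, ψ ω ∂μ.toSphere := by
  let G : E → ℝ → ℝ := fun ω r ↦ ψ ω * Real.exp (-1 * r ^ 2)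
  have h_radial : ∀ r ∈ Ioi (0 : ℝ),
      (∫ ω : sphere (0 : E) 1, ofPolarDensity G (r • (ω : E)) ∂σ) * r ^ (finrank ℝ E - 1) =
        (∫ ω : sphere (0 : E) 1, ψ ω ∂σ) * Real.exp (-1 * r ^ 2) := fun r hr ↦ by
    rw [← integral_mul_const, ← integral_mul_const]
    simp only [mul_comm _ (r ^ _), pow_mul_ofPolarDensity_smul G hr, G]
  have h_mass : 0 < ∫ r in Ioi (0 : ℝ), Real.exp (-1 * r ^ 2) := by
    rw [integral_gaussian_Ioi]
    positivity
  refine mul_right_cancel₀ h_mass.ne' ?_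
  calc (∫ ω : sphere (0 : E) 1, ψ ω ∂σ) * ∫ r in Ioi (0 : ℝ), Real.exp (-1 * r ^ 2)
    _ = ∫ r in Ioi (0 : ℝ), (∫ ω : sphere (0 : E) 1, ofPolarDensity G (r • (ω : E)) ∂σ) *
          r ^ (finrank ℝ E - 1) := by
      rw [setIntegral_congr_fun measurableSet_Ioi h_radial, integral_const_mul]
    _ = ∫ Y, ofPolarDensity G Y ∂μ :=
      (hσ _ (integrable_ofPolarDensity_iff.2
        (hψ.mul_prod (integrable_exp_neg_mul_sq one_pos).integrableOn))).symm
    _ = _ := by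
      rw [integral_ofPolarDensity]
      exact integral_prod_mul (μ := μ.toSphere) (ν := volume.restrict (Ioi 0))
        (fun ω : sphere (0 : E) 1 ↦ ψ ω) (fun r : ℝ ↦ Real.exp (-1 * r ^ 2))

lemma eq_toSphere_of_integral_polar
    (hσ : ∀ f : E → ℝ, Integrable f μ → ∫ Y, f Y ∂μ =
      ∫ r in Ioi (0 : ℝ), (∫ ω : sphere (0 : E) 1, f (r • (ω : E)) ∂σ) * r ^ (finrank ℝ E - 1)) :
    σ = μ.toSphere := by
  have h_real {s : Set (sphere (0 : E) 1)} (hs : MeasurableSet s) :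
      σ.real s = μ.toSphere.real s := by
    have h_indicator : (fun ω : sphere (0 : E) 1 ↦ (Subtype.val '' s).indicator (1 : E → ℝ) ω) =
        s.indicator 1 := funext fun ω ↦ indicator_image Subtype.val_injective
    have h := integral_sphere_eq_of_integral_polar hσ (ψ := (Subtype.val '' s).indicator 1)
      (by rw [h_indicator]; exact (integrable_const 1).indicator hs)
    rwa [h_indicator, integral_indicator_one hs, integral_indicator_one hs] at h
  -- An infinite total mass would have real value `0`.
  have h_univ : σ univ ≠ ⊤ := fun h_top ↦ by
    have h_zero : μ.toSphere.real univ = 0 := by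
      rw [← h_real MeasurableSet.univ, measureReal_def, h_top, ENNReal.toReal_top]
    rw [measureReal_eq_zero_iff, Measure.measure_univ_eq_zero] at h_zero
    exact μ.toSphere_ne_zero h_zero
  have : IsFiniteMeasure σ := ⟨h_univ.lt_top⟩
  exact Measure.ext fun s hs ↦ (measureReal_eq_measureReal_iff).1 (h_real hs)

end PolarCoordinates

section Gaussian

variable {a b : ℝ}

/-- The Gaussian profile `√a exp(-b a r²)` of the kernel along a ray on which `α = a`; the factor
`√a` makes its total mass independent of `a`. -/
noncomputable def radialGaussian (b a r : ℝ) : ℝ :=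
  √a * Real.exp (-(b * a * r ^ 2))

lemma radialGaussian_nonneg (b a r : ℝ) : 0 ≤ radialGaussian b a r := by
  unfold radialGaussian
  positivity

lemma radialGaussian_neg (b a r : ℝ) : radialGaussian b a (-r) = radialGaussian b a r := by
  rw [radialGaussian, neg_sq, radialGaussian]

lemma measurable_radialGaussian (b : ℝ) :
    Measurable fun p : ℝ × ℝ ↦ radialGaussian b p.1 p.2 := by
  unfold radialGaussian
  fun_prop

lemma integrable_radialGaussian (ha : 0 < a) (hb : 0 < b) : Integrable (radialGaussian b a) := by
  unfold radialGaussian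
  simpa only [neg_mul] using (integrable_exp_neg_mul_sq (mul_pos hb ha)).const_mul √a

lemma sqrt_mul_sqrt_div_mul (ha : 0 < a) (b c : ℝ) : √a * √(c / (b * a)) = √(c / b) := by
  rw [← Real.sqrt_mul ha.le, mul_div_left_comm, mul_comm b a, ← div_div, div_self ha.ne',
    mul_one_div]

lemma integral_Ioi_radialGaussian (ha : 0 < a) (b : ℝ) :
    ∫ r in Ioi (0 : ℝ), radialGaussian b a r = √(Real.pi / b) / 2 := by
  simp only [radialGaussian, ← neg_mul (b * a)]
  rw [integral_const_mul, integral_gaussian_Ioi, ← mul_div_assoc, sqrt_mul_sqrt_div_mul ha]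

lemma integral_cexp_mul_radialGaussian (ha : 0 < a) (hb : 0 < b) (s : ℝ) :
    ∫ r : ℝ, Complex.exp (-(Complex.I * (r * s : ℝ))) * (radialGaussian b a r : ℂ) =
      (√(Real.pi / b) * Real.exp (-(s ^ 2 / (4 * b * a))) : ℝ) := by
  have hba : 0 < b * a := mul_pos hb ha
  have h_integrand (r : ℝ) :
      Complex.exp (-(Complex.I * (r * s : ℝ))) * (radialGaussian b a r : ℂ) =
        √a * (Complex.exp (Complex.I * (-s : ℂ) * r) * Complex.exp (-(b * a : ℝ) * r ^ 2)) := by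
    simp only [radialGaussian]
    push_cast
    rw [mul_left_comm]
    congr 3 <;> ring
  have h_sqrt : ((Real.pi : ℂ) / (b * a : ℝ)) ^ (1 / 2 : ℂ) = √(Real.pi / (b * a)) := by
    rw [Real.sqrt_eq_rpow, Complex.ofReal_cpow (by positivity)]
    push_cast
    rfl
  simp_rw [h_integrand]
  rw [integral_const_mul, fourierIntegral_gaussian (by simpa using hba), h_sqrt,
    ← sqrt_mul_sqrt_div_mul ha b]
  push_cast
  rw [mul_assoc]
  congr 3
  ring

lemma integrable_cexp_mul {X : Type*} [MeasurableSpace X] {ν : Measure X} {θ g : X → ℝ}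
    (hθ : AEMeasurable θ ν) (hg : Integrable g ν) :
    Integrable (fun x ↦ Complex.exp (-(Complex.I * (θ x : ℝ))) * (g x : ℂ)) ν := by
  refine hg.ofReal.bdd_mul (c := 1) ?_ (.of_forall fun x ↦ ?_)
  · exact AEMeasurable.aestronglyMeasurable (by fun_prop)
  · simp [Complex.norm_exp]

lemma integral_Ioi_add_comp_neg {F : Type*} [NormedAddCommGroup F] [NormedSpace ℝ F] {f : ℝ → F}
    (hf : Integrable f) : ∫ r in Ioi (0 : ℝ), (f r + f (-r)) = ∫ r, f r := by
  rw [integral_add hf.integrableOn hf.comp_neg.integrableOn, integral_comp_neg_Ioi, neg_zero,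
    add_comm, intervalIntegral.integral_Iic_add_Ioi hf.integrableOn hf.integrableOn]

lemma integral_Ioi_cexp_add_cexp_neg_mul_radialGaussian (ha : 0 < a) (hb : 0 < b) (s : ℝ) :
    ∫ r in Ioi (0 : ℝ), (Complex.exp (-(Complex.I * (r * s : ℝ))) +
        Complex.exp (-(Complex.I * (-r * s : ℝ)))) * (radialGaussian b a r : ℂ) =
      (√(Real.pi / b) * Real.exp (-(s ^ 2 / (4 * b * a))) : ℝ) := by
  have h_int : Integrable fun r : ℝ ↦
      Complex.exp (-(Complex.I * (r * s : ℝ))) * (radialGaussian b a r : ℂ) :=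
    integrable_cexp_mul (by fun_prop) (integrable_radialGaussian ha hb)
  rw [← integral_cexp_mul_radialGaussian ha hb, ← integral_Ioi_add_comp_neg h_int]
  simp only [radialGaussian_neg, add_mul]

end Gaussian

section BoundaryKernel

open Metric (sphere)
open Module (finrank)

variable {E : Type*} [NormedAddCommGroup E]

lemma integral_mul_add_comp_neg [MeasurableSpace E] [MeasurableNeg E] {μ : Measure E}
    [μ.IsNegInvariant] {e K : E → ℂ} (he : Integrable (fun Y ↦ e Y * K Y) μ)
    (he_neg : Integrable (fun Y ↦ e (-Y) * K Y) μ) :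
    ∫ Y, e Y * (K Y + K (-Y)) ∂μ = ∫ Y, (e Y + e (-Y)) * K Y ∂μ := by
  have h_refl : Integrable (fun Y ↦ e Y * K (-Y)) μ := by simpa using he_neg.comp_neg
  simp only [mul_add, add_mul]
  rw [integral_add he h_refl, integral_add he he_neg,
    ← integral_neg_eq_self (fun Y ↦ e (-Y) * K Y) μ]
  simp only [neg_neg]

/-- The boundary kernel `|Y|^(1 - dim E) √(α(Ŷ)) exp(-b α(Ŷ) |Y|²)`, where `Ŷ = Y / |Y|`. -/
noncomputable def boundaryKernel [NormedSpace ℝ E] (b : ℝ) (α : E → ℝ) : E → ℝ :=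
  ofPolarDensity fun ω ↦ radialGaussian b (α ω)

lemma boundaryKernel_eq_rpow_mul [NormedSpace ℝ E] [FiniteDimensional ℝ E] [Nontrivial E]
    (b : ℝ) (α : E → ℝ) (Y : E) :
    boundaryKernel b α Y = ‖Y‖ ^ ((1 : ℝ) - finrank ℝ E) *
      (√(α (‖Y‖⁻¹ • Y)) * Real.exp (-(b * α (‖Y‖⁻¹ • Y) * ‖Y‖ ^ 2))) := by
  rw [boundaryKernel, ofPolarDensity, radialGaussian, ← Real.rpow_natCast,
    Nat.cast_pred Module.finrank_pos, ← Real.rpow_neg (norm_nonneg Y), neg_sub]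

variable [InnerProductSpace ℝ E] {b : ℝ} {α : E → ℝ}

lemma integral_Ioi_pow_smul_cexp_mul_boundaryKernel (hb : 0 < b) (η : E) {ω : sphere (0 : E) 1}
    (hω : 0 < α ω) :
    ∫ r in Ioi (0 : ℝ), r ^ (finrank ℝ E - 1) •
        ((Complex.exp (-(Complex.I * (⟪η, r • (ω : E)⟫ : ℝ))) +
          Complex.exp (-(Complex.I * (⟪η, -(r • (ω : E))⟫ : ℝ)))) *
          (boundaryKernel b α (r • (ω : E)) : ℂ)) =
      (√(Real.pi / b) * Real.exp (-((⟪η, (ω : E)⟫ : ℝ) ^ 2 / (4 * b * α ω))) : ℝ) := by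
  rw [← integral_Ioi_cexp_add_cexp_neg_mul_radialGaussian hω hb]
  refine setIntegral_congr_fun measurableSet_Ioi fun r hr ↦ ?_
  rw [← pow_mul_ofPolarDensity_smul (fun ω ↦ radialGaussian b (α ω)) hr, inner_neg_right,
    inner_smul_right, neg_mul, Complex.real_smul, Complex.ofReal_mul (r ^ _), mul_left_comm,
    boundaryKernel]

variable [FiniteDimensional ℝ E] [Nontrivial E] [MeasurableSpace E] [BorelSpace E]
  {μ : Measure E} [μ.IsAddHaarMeasure]

lemma integrable_boundaryKernel (hb : 0 < b)
    (hα : AEMeasurable (fun ω : sphere (0 : E) 1 ↦ α ω) μ.toSphere)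
    (hα_pos : ∀ᵐ ω : sphere (0 : E) 1 ∂μ.toSphere, 0 < α ω) :
    Integrable (boundaryKernel b α) μ := by
  refine integrable_ofPolarDensity_iff.2 ((integrable_prod_iff ?_).2 ⟨?_, ?_⟩)
  · have hα_fst : AEMeasurable (fun p : sphere (0 : E) 1 × ℝ ↦ α p.1)
        (μ.toSphere.prod (volume.restrict (Ioi 0))) :=
      hα.comp_quasiMeasurePreserving Measure.quasiMeasurePreserving_fst
    exact ((measurable_radialGaussian b).comp_aemeasurable
      (hα_fst.prodMk measurable_snd.aemeasurable)).aestronglyMeasurable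
  · filter_upwards [hα_pos] with ω hω
    exact (integrable_radialGaussian hω hb).restrict
  · refine (integrable_const (√(Real.pi / b) / 2)).congr ?_
    filter_upwards [hα_pos] with ω hω
    simp only [Real.norm_of_nonneg (radialGaussian_nonneg _ _ _)]
    rw [integral_Ioi_radialGaussian hω]

lemma integral_cexp_mul_boundaryKernel_add_neg (hb : 0 < b)
    (hα : AEMeasurable (fun ω : sphere (0 : E) 1 ↦ α ω) μ.toSphere)
    (hα_pos : ∀ᵐ ω : sphere (0 : E) 1 ∂μ.toSphere, 0 < α ω) (η : E) :
    ∫ Y, Complex.exp (-(Complex.I * (⟪η, Y⟫ : ℝ))) *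
        ((boundaryKernel b α Y : ℂ) + (boundaryKernel b α (-Y) : ℂ)) ∂μ =
      (√(Real.pi / b) * ∫ ω : sphere (0 : E) 1,
        Real.exp (-((⟪η, (ω : E)⟫ : ℝ) ^ 2 / (4 * b * α ω))) ∂μ.toSphere : ℝ) := by
  have h_kernel : Integrable (boundaryKernel b α) μ := integrable_boundaryKernel hb hα hα_pos
  have h_pos : Integrable (fun Y ↦ Complex.exp (-(Complex.I * (⟪η, Y⟫ : ℝ))) *
      (boundaryKernel b α Y : ℂ)) μ := integrable_cexp_mul (by fun_prop) h_kernel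
  have h_neg : Integrable (fun Y ↦ Complex.exp (-(Complex.I * (⟪η, -Y⟫ : ℝ))) *
      (boundaryKernel b α Y : ℂ)) μ := integrable_cexp_mul (by fun_prop) h_kernel
  rw [integral_mul_add_comp_neg (K := fun Y ↦ (boundaryKernel b α Y : ℂ)) h_pos h_neg,
    integral_eq_integral_sphere_integral_Ioi (by simpa only [add_mul] using! h_pos.add h_neg),
    ← integral_const_mul, ← integral_complex_ofReal]
  refine integral_congr_ae ?_
  filter_upwards [hα_pos] with ω hω
  exact integral_Ioi_pow_smul_cexp_mul_boundaryKernel hb η hω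

theorem stmt11_general {σ : Measure (sphere (0 : E) 1)}
    (hσ : ∀ f : E → ℝ, Integrable f μ → ∫ Y, f Y ∂μ =
      ∫ r in Ioi (0 : ℝ), (∫ ω : sphere (0 : E) 1, f (r • (ω : E)) ∂σ) * r ^ (finrank ℝ E - 1))
    (hα : AEMeasurable (fun ω : sphere (0 : E) 1 ↦ α ω) σ)
    (hα_pos : ∀ᵐ ω : sphere (0 : E) 1 ∂σ, 0 < α ω) (hb : 0 < b) (η : E) :
    ∫ Y, Complex.exp (-(Complex.I * (⟪η, Y⟫ : ℝ))) * ((‖Y‖ ^ ((1 : ℝ) - finrank ℝ E) *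
        (√(α (‖Y‖⁻¹ • Y)) * Real.exp (-(b * α (‖Y‖⁻¹ • Y) * ‖Y‖ ^ 2)) +
          √(α (-(‖Y‖⁻¹ • Y))) * Real.exp (-(b * α (-(‖Y‖⁻¹ • Y)) * ‖Y‖ ^ 2))) : ℝ)) ∂μ =
      (√(Real.pi / b) * ∫ ω : sphere (0 : E) 1,
        Real.exp (-((⟪η, (ω : E)⟫ : ℝ) ^ 2 / (4 * b * α ω))) ∂σ : ℝ) := by
  obtain rfl := eq_toSphere_of_integral_polar hσ
  rw [← integral_cexp_mul_boundaryKernel_add_neg hb hα hα_pos]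
  simp only [boundaryKernel_eq_rpow_mul, norm_neg, smul_neg, mul_add, Complex.ofReal_add]

end BoundaryKernel

/-- Fourier transform in `Y` of the symmetrized Gaussian boundary kernel with
direction-dependent (not necessarily quadratic-form) convexity function `α`, computed by polar
coordinates: it equals `√(π/b) ∫_{S^{n-2}} exp(-(η·ω)²/(4bα(ω))) dσ(ω)`. -/
theorem stmt11 (n : ℕ) (hn : 3 ≤ n)
    (σ : Measure ↥(Metric.sphere (0 : EuclideanSpace ℝ (Fin (n - 1))) 1))
    (hσ : ∀ f : EuclideanSpace ℝ (Fin (n - 1)) → ℝ, Integrable f →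
      ∫ Y, f Y = ∫ r in Set.Ioi (0 : ℝ),
        (∫ ω : ↥(Metric.sphere (0 : EuclideanSpace ℝ (Fin (n - 1))) 1),
          f (r • (ω : EuclideanSpace ℝ (Fin (n - 1)))) ∂σ) * r ^ (n - 2))
    (α : EuclideanSpace ℝ (Fin (n - 1)) → ℝ)
    (hαcont : ContinuousOn α (Metric.sphere (0 : EuclideanSpace ℝ (Fin (n - 1))) 1))
    (hαpos : ∀ ω ∈ Metric.sphere (0 : EuclideanSpace ℝ (Fin (n - 1))) 1, 0 < α ω)
    (b : ℝ) (hb : 0 < b) (η : EuclideanSpace ℝ (Fin (n - 1))) :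
    ∫ Y : EuclideanSpace ℝ (Fin (n - 1)),
        Complex.exp (-(Complex.I * (⟪η, Y⟫ : ℝ))) * ((‖Y‖ ^ ((2 : ℝ) - n) *
          (Real.sqrt (α (‖Y‖⁻¹ • Y)) * Real.exp (-(b * α (‖Y‖⁻¹ • Y) * ‖Y‖ ^ 2))
            + Real.sqrt (α (-(‖Y‖⁻¹ • Y))) * Real.exp (-(b * α (-(‖Y‖⁻¹ • Y)) * ‖Y‖ ^ 2))) : ℝ))
      = ((Real.sqrt (Real.pi / b) *
          ∫ ω : ↥(Metric.sphere (0 : EuclideanSpace ℝ (Fin (n - 1))) 1),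
            Real.exp (-((⟪η, (ω : EuclideanSpace ℝ (Fin (n - 1)))⟫ : ℝ) ^ 2 /
              (4 * b * α (ω : EuclideanSpace ℝ (Fin (n - 1)))))) ∂σ : ℝ) : ℂ) := by
  have : Nontrivial (Fin (n - 1)) := Fin.nontrivial_iff_two_le.2 (by omega)
  have h_dim : (2 : ℝ) - n = 1 - Module.finrank ℝ (EuclideanSpace ℝ (Fin (n - 1))) := by
    rw [finrank_euclideanSpace_fin, Nat.cast_pred (by omega)]
    ring
  rw [h_dim]
  exact stmt11_general (by simpa only [finrank_euclideanSpace_fin, Nat.sub_sub] using hσ)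
    hαcont.domRestrict.measurable.aemeasurable (.of_forall fun ω ↦ hαpos ω ω.2) hb η
end

section
/- Let $n \ge 3$, $F > 0$, $c > 0$, let $\sigma$ denote the surface measure on $\mathbb{S}^{n-2} \subset \mathbb{R}^{n-1}$ (normalized so that $\int_{\mathbb{R}^{n-1}} f(Y)\, dY = \int_0^\infty \int_{\mathbb{S}^{n-2}} f(r\omega)\, r^{n-2}\, d\sigma(\omega)\, dr$), and let $\alpha : \mathbb{S}^{n-2} \to \mathbb{R}$ be continuous with $c_1 \le \alpha(\omega) \le c_2$ for some constants $c_2 \ge c_1 > 0$. Writing $\langle\xi\rangle = (\xi^2 + F^2)^{1/2}$, there exists $c' > 0$ such that for all $\xi \in \mathbb{R}$ and $\eta \in \mathbb{R}^{n-1}$, $\frac{1}{\langle\xi\rangle} \int_{\mathbb{S}^{n-2}} \exp\!\left(-\frac{(\eta\cdot\omega)^2}{4\, c\, \alpha(\omega)\, \langle\xi\rangle^2}\right) d\sigma(\omega) \;\ge\; \frac{c'}{\sqrt{1 + \xi^2 + |\eta|^2}}.$ -/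
open MeasureTheory Set
open scoped RealInnerProductSpace

/-!
Tested on the cones over subsets of the sphere, the polar integration formula determines `σ`: it is
`volume.toSphere`. On the slab `|⟪η, ω⟫| ≤ t` with `t = √(4 c c₁) ⟨ξ⟩` the Gaussian is at least
`exp (-1)`, so it suffices to bound the measure of that slab from below by a multiple of
`t / (t + ‖η‖)`; this single bound covers both regimes `‖η‖ ≲ ⟨ξ⟩` and `‖η‖ ≳ ⟨ξ⟩`. To obtain it,
contract a fixed ball centred on the hyperplane `η^⊥` by the factor `δ = t / (t + ‖η‖)` in the
direction of `η`. The contraction has determinant `δ`, and the contracted ball lies in the cone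
over the slab.
-/

open Metric Module Measure
open scoped Pointwise

section Polar

variable {E : Type*} [NormedAddCommGroup E] [NormedSpace ℝ E]

lemma smul_mem_Ioo_smul_image_sphere {A : Set (sphere (0 : E) 1)} {r : ℝ} (hr : 0 < r)
    {ω : sphere (0 : E) 1} :
    r • (ω : E) ∈ Ioo (0 : ℝ) 1 • ((↑) '' A : Set E) ↔ r < 1 ∧ ω ∈ A := by
  constructor
  · rintro ⟨t, ⟨ht₀, ht₁⟩, _, ⟨ω', hω', rfl⟩, h⟩
    have htr : t = r := by
      simpa [norm_smul, abs_of_pos hr, abs_of_pos ht₀] using congrArg norm h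
    subst htr
    have hω : ω' = ω := Subtype.ext (smul_right_injective E ht₀.ne' h)
    exact ⟨ht₁, hω ▸ hω'⟩
  · rintro ⟨hr₁, hω⟩
    exact smul_mem_smul ⟨hr, hr₁⟩ (mem_image_of_mem _ hω)

variable [MeasurableSpace E]

/-- The measure `σ` on the unit sphere is the angular part of `μ` in polar coordinates: integrals
against `μ` can be computed as iterated integrals against `σ` and `r ^ (dim E - 1) dr`. -/
def IsAngularPart (μ : Measure E) (σ : Measure (sphere (0 : E) 1)) : Prop :=
  ∀ f : E → ℝ, Integrable f μ →
    ∫ x, f x ∂μ = ∫ r in Ioi (0 : ℝ), (∫ ω, f (r • (ω : E)) ∂σ) * r ^ (finrank ℝ E - 1)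

variable {μ : Measure E}

lemma measure_Ioo_smul_image_sphere_lt_top [ProperSpace E] [IsFiniteMeasureOnCompacts μ]
    (A : Set (sphere (0 : E) 1)) :
    μ (Ioo (0 : ℝ) 1 • ((↑) '' A : Set E)) < ⊤ := by
  refine (measure_mono ?_).trans_lt (measure_ball_lt_top (x := (0 : E)) (r := 1))
  rintro _ ⟨t, ⟨ht₀, ht₁⟩, _, ⟨ω, -, rfl⟩, rfl⟩
  simpa [norm_smul, abs_of_pos ht₀] using ht₁

variable [BorelSpace E]

lemma measurableSet_Ioo_smul_image_sphere {A : Set (sphere (0 : E) 1)} (hA : MeasurableSet A) :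
    MeasurableSet (Ioo (0 : ℝ) 1 • ((↑) '' A : Set E)) := by
  have hcone : Ioo (0 : ℝ) 1 • ((↑) '' A : Set E) =
      (↑) '' (homeomorphUnitSphereProd E ⁻¹' A ×ˢ Iio ⟨1, mem_Ioi.2 one_pos⟩) := by
    rw [← image2_smul, image2_image_right, ← Homeomorph.image_symm, image_image,
      ← image_subtype_val_Ioi_Iio ⟨1, mem_Ioi.2 one_pos⟩, image2_image_left, image2_swap,
      ← image_prod]
    rfl
  rw [hcone]
  exact (measurableSet_singleton _).compl.subtype_image
    ((homeomorphUnitSphereProd E).measurable (hA.prod measurableSet_Iio))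

lemma toSphere_real_apply {A : Set (sphere (0 : E) 1)} (hA : MeasurableSet A) :
    μ.toSphere.real A = finrank ℝ E * μ.real (Ioo (0 : ℝ) 1 • ((↑) '' A)) := by
  simp [measureReal_def, μ.toSphere_apply' hA]

variable [FiniteDimensional ℝ E] [μ.IsAddHaarMeasure] [Nontrivial E]
  {σ : Measure (sphere (0 : E) 1)}

lemma IsAngularPart.real_eq_toSphere_real (hσ : IsAngularPart μ σ) {A : Set (sphere (0 : E) 1)}
    (hA : MeasurableSet A) : σ.real A = μ.toSphere.real A := by
  set d := finrank ℝ E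
  have hd : 0 < d := finrank_pos
  set K : Set E := Ioo (0 : ℝ) 1 • ((↑) '' A)
  have hK : MeasurableSet K := measurableSet_Ioo_smul_image_sphere hA
  have hslice (r : ℝ) (hr : r ∈ Ioi (0 : ℝ)) :
      (∫ ω, K.indicator 1 (r • (ω : E)) ∂σ) * r ^ (d - 1) =
        (Iio 1).indicator (fun r ↦ σ.real A * r ^ (d - 1)) r := by
    have hind (ω : sphere (0 : E) 1) :
        K.indicator (1 : E → ℝ) (r • (ω : E)) = if r < 1 then A.indicator 1 ω else 0 := by
      classical
      simp only [indicator_apply, K, smul_mem_Ioo_smul_image_sphere hr, ite_and, Pi.one_apply]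
    by_cases hr₁ : r < 1 <;> simp [hind, hr₁, integral_indicator_one hA]
  have hvol : μ.real K = σ.real A / d := calc
    μ.real K = ∫ x, K.indicator 1 x ∂μ := (integral_indicator_one hK).symm
    _ = ∫ r in Ioi (0 : ℝ), (∫ ω, K.indicator 1 (r • (ω : E)) ∂σ) * r ^ (d - 1) :=
      hσ _ ((integrable_indicator_iff hK).2
        (integrableOn_const (measure_Ioo_smul_image_sphere_lt_top A).ne))
    _ = ∫ r in Ioo (0 : ℝ) 1, σ.real A * r ^ (d - 1) := by
      rw [setIntegral_congr_fun measurableSet_Ioi hslice, setIntegral_indicator measurableSet_Iio,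
        Ioi_inter_Iio]
    _ = σ.real A / d := by
      rw [integral_const_mul, ← integral_Ioc_eq_integral_Ioo,
        ← intervalIntegral.integral_of_le zero_le_one, integral_pow]
      simp [Nat.sub_add_cancel hd, hd.ne', Nat.cast_pred hd, div_eq_mul_inv]
  rw [toSphere_real_apply hA, hvol]
  exact (mul_div_cancel₀ _ (Nat.cast_ne_zero.2 hd.ne')).symm

theorem IsAngularPart.eq_toSphere (hσ : IsAngularPart μ σ) : σ = μ.toSphere := by
  have hfin : σ univ ≠ ⊤ := by
    intro htop
    have hpos : μ.toSphere.real univ ≠ 0 :=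
      (measureReal_ne_zero_iff).2 (measure_univ_ne_zero.2 μ.toSphere_ne_zero)
    apply hpos
    rw [← hσ.real_eq_toSphere_real .univ, measureReal_def, htop, ENNReal.toReal_top]
  have : IsFiniteMeasure σ := ⟨hfin.lt_top⟩
  ext A hA
  exact (measureReal_eq_measureReal_iff).1 (hσ.real_eq_toSphere_real hA)

end Polar

section Squeeze

variable {E : Type*} [NormedAddCommGroup E] [InnerProductSpace ℝ E] {e : E} {δ : ℝ}

/-- For a unit vector `e`, the linear map that scales the direction `e` by `δ` and fixes the
orthogonal complement of `e`. -/
noncomputable def squeeze (e : E) (δ : ℝ) : E →ₗ[ℝ] E :=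
  LinearMap.transvection (innerₗ E e) ((δ - 1) • e)

lemma squeeze_apply (e : E) (δ : ℝ) (x : E) : squeeze e δ x = x + (⟪e, x⟫ * (δ - 1)) • e := by
  simp [squeeze, LinearMap.transvection.apply, smul_smul]

lemma squeeze_of_inner_eq_zero {v : E} (hv : ⟪e, v⟫ = 0) : squeeze e δ v = v := by
  simp [squeeze_apply, hv]

lemma inner_squeeze (he : ‖e‖ = 1) (x : E) : ⟪e, squeeze e δ x⟫ = δ * ⟪e, x⟫ := by
  rw [squeeze_apply, inner_add_right, inner_smul_right, real_inner_self_eq_norm_sq, he]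
  ring

lemma norm_squeeze_le (he : ‖e‖ = 1) (hδ : |δ| ≤ 1) (x : E) : ‖squeeze e δ x‖ ≤ ‖x‖ := by
  have hsq : ‖squeeze e δ x‖ ^ 2 = ‖x‖ ^ 2 - (1 - δ ^ 2) * ⟪e, x⟫ ^ 2 := by
    rw [squeeze_apply, norm_add_sq_real, norm_smul, he, inner_smul_right, real_inner_comm,
      Real.norm_eq_abs, mul_one, sq_abs]
    ring
  have hδ₂ : 0 ≤ 1 - δ ^ 2 := sub_nonneg.2 ((sq_le_one_iff_abs_le_one δ).2 hδ)
  refine le_of_sq_le_sq ?_ (norm_nonneg x)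
  rw [hsq]
  exact sub_le_self _ (mul_nonneg hδ₂ (sq_nonneg _))

variable [FiniteDimensional ℝ E]

lemma det_squeeze (he : ‖e‖ = 1) (δ : ℝ) : LinearMap.det (squeeze e δ) = δ := by
  simp [squeeze, LinearMap.transvection.det, he]

lemma exists_norm_eq_and_inner_eq_zero (hE : 2 ≤ finrank ℝ E) (e : E) {r : ℝ} (hr : 0 ≤ r) :
    ∃ v : E, ‖v‖ = r ∧ ⟪e, v⟫ = 0 := by
  have hdim := (ℝ ∙ e).finrank_add_finrank_orthogonal
  have hspan : finrank ℝ (ℝ ∙ e) ≤ 1 := by simpa using finrank_span_le_card ({e} : Set E)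
  have : Nontrivial (ℝ ∙ e)ᗮ := nontrivial_of_finrank_pos (R := ℝ) (by omega)
  obtain ⟨v, hv⟩ := exists_norm_eq (ℝ ∙ e)ᗮ hr
  exact ⟨v, hv, Submodule.mem_orthogonal_singleton_iff_inner_right.1 v.2⟩

end Squeeze

section Slab

variable {E : Type*} [NormedAddCommGroup E] [InnerProductSpace ℝ E]

lemma exists_norm_eq_one_and_norm_smul_eq [Nontrivial E] (x : E) :
    ∃ e : E, ‖e‖ = 1 ∧ ‖x‖ • e = x := by
  rcases eq_or_ne x 0 with rfl | hx
  · obtain ⟨e, he⟩ := exists_norm_eq E zero_le_one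
    exact ⟨e, he, by simp⟩
  · exact ⟨NormedSpace.normalize x, NormedSpace.norm_normalize_eq_one_iff.2 hx,
      NormedSpace.norm_smul_normalize x⟩

lemma mem_Ioo_smul_slab {e x : E} {δ : ℝ} (hx₀ : x ≠ 0) (hx₁ : ‖x‖ < 1)
    (hx : |⟪e, x⟫| ≤ δ * ‖x‖) :
    x ∈ Ioo (0 : ℝ) 1 • ((↑) '' {ω : sphere (0 : E) 1 | |⟪e, (ω : E)⟫| ≤ δ} : Set E) := by
  have hpos : 0 < ‖x‖ := norm_pos_iff.2 hx₀
  have hsphere : ‖x‖⁻¹ • x ∈ sphere (0 : E) 1 := by simp [norm_smul, hpos.ne']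
  have hslab : |⟪e, ‖x‖⁻¹ • x⟫| ≤ δ := by
    rwa [inner_smul_right, abs_mul, abs_of_pos (inv_pos.2 hpos), inv_mul_le_iff₀' hpos]
  exact ⟨‖x‖, ⟨hpos, hx₁⟩, _, ⟨⟨_, hsphere⟩, hslab, rfl⟩, smul_inv_smul₀ hpos.ne' x⟩

lemma squeeze_image_ball_subset {e v : E} {δ : ℝ} (he : ‖e‖ = 1) (hδ₀ : 0 ≤ δ) (hδ₁ : δ ≤ 1)
    (hv : ‖v‖ = 2 / 3) (hev : ⟪e, v⟫ = 0) :
    squeeze e δ '' ball v (1 / 3) ⊆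
      Ioo (0 : ℝ) 1 • ((↑) '' {ω : sphere (0 : E) 1 | |⟪e, (ω : E)⟫| ≤ δ} : Set E) := by
  rintro _ ⟨x, hx, rfl⟩
  have hxv : ‖x - v‖ < 1 / 3 := mem_ball_iff_norm.1 hx
  have hTv : ‖squeeze e δ x - v‖ < 1 / 3 := calc
    ‖squeeze e δ x - v‖ = ‖squeeze e δ (x - v)‖ := by
      rw [map_sub, squeeze_of_inner_eq_zero hev]
    _ ≤ ‖x - v‖ := norm_squeeze_le he (abs_le.2 ⟨by linarith, hδ₁⟩) _
    _ < 1 / 3 := hxv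
  have hlower : 1 / 3 < ‖squeeze e δ x‖ := by
    linarith [norm_sub_norm_le v (squeeze e δ x), norm_sub_rev v (squeeze e δ x)]
  have hupper : ‖squeeze e δ x‖ < 1 := by
    linarith [norm_le_norm_add_norm_sub' (squeeze e δ x) v]
  have hinner : |⟪e, x⟫| ≤ ‖squeeze e δ x‖ := calc
    |⟪e, x⟫| = |⟪e, x - v⟫| := by rw [inner_sub_right, hev, sub_zero]
    _ ≤ ‖e‖ * ‖x - v‖ := abs_real_inner_le_norm _ _
    _ ≤ ‖squeeze e δ x‖ := by rw [he, one_mul]; linarith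
  refine mem_Ioo_smul_slab (norm_pos_iff.1 (by linarith)) hupper ?_
  rw [inner_squeeze he, abs_mul, abs_of_nonneg hδ₀]
  gcongr

variable [MeasurableSpace E] [BorelSpace E]

lemma measurableSet_slab (η : E) (t : ℝ) :
    MeasurableSet {ω : sphere (0 : E) 1 | |⟪η, (ω : E)⟫| ≤ t} :=
  (isClosed_le (by fun_prop) continuous_const).measurableSet

variable [FiniteDimensional ℝ E] (μ : Measure E) [μ.IsAddHaarMeasure]

lemma mul_le_toSphere_real_slab_of_norm_eq_one (hE : 2 ≤ finrank ℝ E) {e : E} (he : ‖e‖ = 1)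
    {δ : ℝ} (hδ₀ : 0 ≤ δ) (hδ₁ : δ ≤ 1) :
    finrank ℝ E * μ.real (ball 0 (1 / 3)) * δ ≤
      μ.toSphere.real {ω | |⟪e, (ω : E)⟫| ≤ δ} := by
  obtain ⟨v, hv, hev⟩ := exists_norm_eq_and_inner_eq_zero hE e (r := 2 / 3) (by norm_num)
  have himage : μ.real (squeeze e δ '' ball v (1 / 3)) = δ * μ.real (ball 0 (1 / 3)) := by
    rw [measureReal_def, addHaar_image_linearMap, det_squeeze he, abs_of_nonneg hδ₀,
      ENNReal.toReal_mul, ENNReal.toReal_ofReal hδ₀, ← measureReal_def, addHaar_real_ball_center]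
  rw [toSphere_real_apply (measurableSet_slab e δ), mul_assoc, mul_comm (μ.real _), ← himage]
  gcongr
  · exact (measure_Ioo_smul_image_sphere_lt_top _).ne
  · exact squeeze_image_ball_subset he hδ₀ hδ₁ hv hev

lemma mul_div_add_norm_le_toSphere_real_slab (hE : 2 ≤ finrank ℝ E) (η : E) {t : ℝ}
    (ht : 0 < t) :
    finrank ℝ E * μ.real (ball 0 (1 / 3)) * (t / (t + ‖η‖)) ≤
      μ.toSphere.real {ω | |⟪η, (ω : E)⟫| ≤ t} := by
  have : Nontrivial E := nontrivial_of_finrank_pos (R := ℝ) (by omega)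
  obtain ⟨e, he, hη⟩ := exists_norm_eq_one_and_norm_smul_eq η
  have hδ₁ : t / (t + ‖η‖) ≤ 1 := div_le_one_of_le₀ (by simp) (by positivity)
  have hηδ : ‖η‖ * (t / (t + ‖η‖)) ≤ t := by
    rw [mul_div_left_comm]
    exact mul_le_of_le_one_right ht.le (div_le_one_of_le₀ (by linarith) (by positivity))
  refine (mul_le_toSphere_real_slab_of_norm_eq_one μ hE he (by positivity) hδ₁).trans
    (measureReal_mono fun ω hω ↦ ?_)
  calc |⟪η, (ω : E)⟫| = ‖η‖ * |⟪e, (ω : E)⟫| := by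
        rw [← abs_norm η, ← abs_mul, ← real_inner_smul_left, hη]
    _ ≤ ‖η‖ * (t / (t + ‖η‖)) := by gcongr; exact hω
    _ ≤ t := hηδ

end Slab

lemma exp_neg_one_mul_measureReal_abs_le_le_integral {X : Type*} [MeasurableSpace X]
    {ν : Measure X} [IsFiniteMeasure ν] {g κ : X → ℝ} (hg : AEMeasurable g ν)
    (hκ : AEMeasurable κ ν) {t : ℝ} (ht : ∀ x, t ^ 2 ≤ κ x) :
    Real.exp (-1) * ν.real {x | |g x| ≤ t} ≤ ∫ x, Real.exp (-(g x ^ 2 / κ x)) ∂ν := by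
  have hκ₀ (x : X) : 0 ≤ κ x := (sq_nonneg t).trans (ht x)
  have hint : Integrable (fun x ↦ Real.exp (-(g x ^ 2 / κ x))) ν := by
    refine .of_bound (AEMeasurable.aestronglyMeasurable (by fun_prop)) 1 (.of_forall fun x ↦ ?_)
    rw [Real.norm_eq_abs, Real.abs_exp, Real.exp_le_one_iff, neg_nonpos]
    exact div_nonneg (sq_nonneg _) (hκ₀ x)
  have hsub : {x | |g x| ≤ t} ⊆ {x | Real.exp (-1) ≤ Real.exp (-(g x ^ 2 / κ x))} := by
    intro x hx
    have hgκ : g x ^ 2 ≤ κ x := (sq_le_sq' (abs_le.1 hx).1 (abs_le.1 hx).2).trans (ht x)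
    exact Real.exp_le_exp.2 (neg_le_neg (div_le_one_of_le₀ hgκ (hκ₀ x)))
  calc Real.exp (-1) * ν.real {x | |g x| ≤ t}
      ≤ Real.exp (-1) * ν.real {x | Real.exp (-1) ≤ Real.exp (-(g x ^ 2 / κ x))} := by
        gcongr
        finiteness
    _ ≤ ∫ x, Real.exp (-(g x ^ 2 / κ x)) ∂ν :=
        mul_meas_ge_le_integral_of_nonneg (.of_forall fun _ ↦ (Real.exp_pos _).le) hint _

lemma mul_sqrt_add_le_mul_sqrt {F q y : ℝ} (hF : 0 ≤ F) (hq : 0 ≤ q) (ξ : ℝ) :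
    q * √(ξ ^ 2 + F ^ 2) + y ≤ (q * (1 + F) + 1) * √(1 + ξ ^ 2 + y ^ 2) := by
  have hξ : √(ξ ^ 2 + F ^ 2) ≤ (1 + F) * √(1 + ξ ^ 2 + y ^ 2) := by
    refine Real.sqrt_le_iff.2 ⟨by positivity, ?_⟩
    rw [mul_pow, Real.sq_sqrt (by positivity)]
    nlinarith [sq_nonneg ξ, sq_nonneg y, sq_nonneg (F * ξ), sq_nonneg ((1 + F) * y),
      mul_nonneg hF (sq_nonneg ξ)]
  have hy : y ≤ √(1 + ξ ^ 2 + y ^ 2) := Real.le_sqrt_of_sq_le (by nlinarith [sq_nonneg ξ])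
  calc q * √(ξ ^ 2 + F ^ 2) + y
      ≤ q * ((1 + F) * √(1 + ξ ^ 2 + y ^ 2)) + √(1 + ξ ^ 2 + y ^ 2) := by gcongr
    _ = (q * (1 + F) + 1) * √(1 + ξ ^ 2 + y ^ 2) := by ring

theorem stmt14_general {E : Type*} [NormedAddCommGroup E] [InnerProductSpace ℝ E]
    [FiniteDimensional ℝ E] [MeasurableSpace E] [BorelSpace E] {μ : Measure E}
    [μ.IsAddHaarMeasure] {σ : Measure (sphere (0 : E) 1)} (hσ : IsAngularPart μ σ)
    (hE : 2 ≤ finrank ℝ E) {F c c₁ : ℝ} (hF : 0 < F) (hc : 0 < c) (hc₁ : 0 < c₁)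
    {α : sphere (0 : E) 1 → ℝ} (hα : AEMeasurable α σ) (hc₁α : ∀ ω, c₁ ≤ α ω) :
    ∃ c' : ℝ, 0 < c' ∧ ∀ (ξ : ℝ) (η : E),
      c' / √(1 + ξ ^ 2 + ‖η‖ ^ 2) ≤ (1 / √(ξ ^ 2 + F ^ 2)) *
        ∫ ω, Real.exp (-(⟪η, (ω : E)⟫ ^ 2 / (4 * c * α ω * (ξ ^ 2 + F ^ 2)))) ∂σ := by
  have : Nontrivial E := nontrivial_of_finrank_pos (R := ℝ) (by omega)
  obtain rfl := hσ.eq_toSphere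
  set q := √(4 * c * c₁)
  have hq : 0 < q := by positivity
  set M := finrank ℝ E * μ.real (ball 0 (1 / 3))
  have hM : 0 < M := mul_pos (by positivity)
    (ENNReal.toReal_pos (measure_ball_pos _ _ (by norm_num)).ne' measure_ball_lt_top.ne)
  refine ⟨Real.exp (-1) * M * q / (q * (1 + F) + 1), by positivity, fun ξ η ↦ ?_⟩
  set s := √(ξ ^ 2 + F ^ 2)
  have hs : 0 < s := by positivity
  have hthreshold (ω : sphere (0 : E) 1) : (q * s) ^ 2 ≤ 4 * c * α ω * (ξ ^ 2 + F ^ 2) := by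
    rw [mul_pow, Real.sq_sqrt (by positivity), Real.sq_sqrt (by positivity)]
    gcongr
    exact hc₁α ω
  calc Real.exp (-1) * M * q / (q * (1 + F) + 1) / √(1 + ξ ^ 2 + ‖η‖ ^ 2)
      ≤ Real.exp (-1) * M * q / (q * s + ‖η‖) := by
        rw [div_div]
        gcongr
        exact mul_sqrt_add_le_mul_sqrt hF.le hq.le ξ
    _ = 1 / s * (Real.exp (-1) * (M * (q * s / (q * s + ‖η‖)))) := by field_simp
    _ ≤ 1 / s * (Real.exp (-1) * μ.toSphere.real {ω | |⟪η, (ω : E)⟫| ≤ q * s}) := by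
        gcongr
        exact mul_div_add_norm_le_toSphere_real_slab μ hE η (by positivity)
    _ ≤ _ := by
        gcongr
        exact exp_neg_one_mul_measureReal_abs_le_le_integral (by fun_prop) (by fun_prop) hthreshold

/-- The key joint `(ξ, η)` lower bound for the boundary principal symbol of the
conjugated normal operator: with `⟨ξ⟩² = ξ² + F²`, the quantity
`⟨ξ⟩⁻¹ ∫_{S^{n-2}} exp(-(η·ω)²/(4cα(ω)⟨ξ⟩²)) dσ(ω)` is bounded below by
`c'/√(1 + ξ² + |η|²)`. -/
theorem stmt14 (n : ℕ) (hn : 3 ≤ n) (F c c₁ c₂ : ℝ) (hF : 0 < F) (hc : 0 < c)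
    (σ : Measure ↥(Metric.sphere (0 : EuclideanSpace ℝ (Fin (n - 1))) 1))
    (hσ : ∀ f : EuclideanSpace ℝ (Fin (n - 1)) → ℝ, Integrable f →
      ∫ Y, f Y = ∫ r in Set.Ioi (0 : ℝ),
        (∫ ω : ↥(Metric.sphere (0 : EuclideanSpace ℝ (Fin (n - 1))) 1),
          f (r • (ω : EuclideanSpace ℝ (Fin (n - 1)))) ∂σ) * r ^ (n - 2))
    (α : EuclideanSpace ℝ (Fin (n - 1)) → ℝ)
    (hαcont : ContinuousOn α (Metric.sphere (0 : EuclideanSpace ℝ (Fin (n - 1))) 1))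
    (hc₁ : 0 < c₁)
    (hα : ∀ ω ∈ Metric.sphere (0 : EuclideanSpace ℝ (Fin (n - 1))) 1, c₁ ≤ α ω ∧ α ω ≤ c₂) :
    ∃ c' : ℝ, 0 < c' ∧ ∀ (ξ : ℝ) (η : EuclideanSpace ℝ (Fin (n - 1))),
      c' / Real.sqrt (1 + ξ ^ 2 + ‖η‖ ^ 2) ≤
        (1 / Real.sqrt (ξ ^ 2 + F ^ 2)) *
          ∫ ω : ↥(Metric.sphere (0 : EuclideanSpace ℝ (Fin (n - 1))) 1),
            Real.exp (-((⟪η, (ω : EuclideanSpace ℝ (Fin (n - 1)))⟫ : ℝ) ^ 2 /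
              (4 * c * α (ω : EuclideanSpace ℝ (Fin (n - 1))) * (ξ ^ 2 + F ^ 2)))) ∂σ := by
  refine stmt14_general (μ := volume) ?_ ?_ hF hc hc₁ ?_ fun ω ↦ (hα ω ω.2).1
  · simpa [IsAngularPart, Nat.sub_sub] using hσ
  · rw [finrank_euclideanSpace_fin]; omega
  · exact (continuousOn_iff_continuous_domRestrict.1 hαcont).aemeasurable
end
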